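/- Let p ≥ 7 be an odd integer and let b be a real number with 0 < b < b₀. Suppose u is real-analytic on a neighborhood of ρ = 1 and satisfies the self-similar profile equation (1−ρ²)u''(ρ) + (2/ρ − (2+2α)ρ)u'(ρ) − α(α+1)u(ρ) + u(ρ)^p = 0 there (for ρ ≠ 1), with u(1) = b. Then u extends to a solution of the equation defined for all ρ ≥ 1, and this extension satisfies 0 < u(ρ) < b₀ for every ρ > 1. -/

import Mathlib

open Set Real Filter

/-- The exponent `α = 2/(p-1)`. -/
noncomputable def alphaP (p : ℕ) : ℝ := 2 / ((p : ℝ) - 1)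

/-- `b₀ = (2(p+1)/(p-1)²)^(1/(p-1))`, the constant solution. -/
noncomputable def bZero (p : ℕ) : ℝ :=
  (2 * ((p : ℝ) + 1) / ((p : ℝ) - 1) ^ 2) ^ ((1 : ℝ) / ((p : ℝ) - 1))

/-- `b∞ = (2(p-3)/(p-1)²)^(1/(p-1))`. -/
noncomputable def bInfty (p : ℕ) : ℝ :=
  (2 * ((p : ℝ) - 3) / ((p : ℝ) - 1) ^ 2) ^ ((1 : ℝ) / ((p : ℝ) - 1))

/-- The singular static solution `u∞(ρ) = b∞ ρ^(-α)`. -/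
noncomputable def uInfty (p : ℕ) (ρ : ℝ) : ℝ := bInfty p * ρ ^ (-(alphaP p))

/-- The self-similar profile equation
`(1-ρ²)u'' + (2/ρ - (2+2α)ρ)u' - α(α+1)u + u^p = 0` at the point `ρ`. -/
def ProfileEq (p : ℕ) (u : ℝ → ℝ) (ρ : ℝ) : Prop :=
  (1 - ρ ^ 2) * deriv (deriv u) ρ + (2 / ρ - (2 + 2 * alphaP p) * ρ) * deriv u ρ
    - alphaP p * (alphaP p + 1) * u ρ + u ρ ^ p = 0

/-!
Write the profile equation as a first-order system for `(u, u')`. For `ρ > 1` the region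
`0 < u < b₀`, `u' < 0`, `(ρ u)' > 0` is forward invariant: inside it `u` decreases and `ρ u`
increases, so `u` can reach neither `b₀` nor `0`; where `u'` vanishes the equation gives `u'' < 0`,
and where `(ρ u)'` vanishes it gives `(ρ u)'' = ρ (α (1 - α) u + u ^ p) / (ρ² - 1) > 0`.
At `ρ = 1` the equation degenerates to `2 α u' = u ^ p - α (α + 1) u`, which places `(u, u')` in the
region. The region lies in a fixed compact box, so the field may be truncated outside the box to a
bounded Lipschitz one without affecting the solution, and the truncated system has global solutions.
-/

open scoped Topology NNReal

/-! ### Extension of solutions of ordinary differential equations -/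

section GlobalExtension

variable {E : Type*} [NormedAddCommGroup E] [NormedSpace ℝ E] {F : ℝ → E → E} {a c : ℝ}

lemma exists_forall_mem_Ioo_hasDerivAt_of_bounded_of_lipschitzWith [CompleteSpace E] {T t₀ : ℝ}
    (ht₀ : t₀ ∈ Icc a T) (hcont : ∀ x, ContinuousOn (F · x) (Icc a T)) {L K : ℝ≥0}
    (hbdd : ∀ t ∈ Icc a T, ∀ x, ‖F t x‖ ≤ L) (hlip : ∀ t ∈ Icc a T, LipschitzWith K (F t))
    (x₀ : E) :
    ∃ X : ℝ → E, X t₀ = x₀ ∧ ∀ t ∈ Ioo a T, HasDerivAt X (F t (X t)) t := by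
  have hPL : IsPicardLindelof F (⟨t₀, ht₀⟩ : Icc a T) x₀
      (L * (max (T - t₀) (t₀ - a)).toNNReal) 0 L K := by
    refine ⟨fun t ht ↦ (hlip t ht).lipschitzOnWith, fun x _ ↦ hcont x,
      fun t ht x _ ↦ hbdd t ht x, ?_⟩
    rw [NNReal.coe_mul, NNReal.coe_zero, sub_zero]
    gcongr
    exact Real.le_coe_toNNReal _
  obtain ⟨X, hX₀, hX⟩ := hPL.exists_eq_forall_mem_Icc_hasDerivWithinAt₀
  exact ⟨X, hX₀, fun t ht ↦
    (hX t (Ioo_subset_Icc_self ht)).hasDerivAt (Icc_mem_nhds ht.1 ht.2)⟩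

lemma eqOn_Ioo_of_hasDerivAt_of_lipschitzWith {T t₀ : ℝ} (ht₀ : t₀ ∈ Ioo a T) {K : ℝ≥0}
    (hlip : ∀ t ∈ Ioo a T, LipschitzWith K (F t)) {X Y : ℝ → E}
    (hX : ∀ t ∈ Ioo a T, HasDerivAt X (F t (X t)) t)
    (hY : ∀ t ∈ Ioo a T, HasDerivAt Y (F t (Y t)) t) (h₀ : X t₀ = Y t₀) :
    EqOn X Y (Ioo a T) :=
  ODE_solution_unique_of_mem_Ioo (s := fun _ ↦ univ)
    (fun t ht ↦ (hlip t ht).lipschitzOnWith) ht₀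
    (fun t ht ↦ ⟨hX t ht, mem_univ _⟩) (fun t ht ↦ ⟨hY t ht, mem_univ _⟩) h₀

theorem exists_forall_gt_hasDerivAt_of_bounded_of_lipschitzWith [CompleteSpace E] {t₀ : ℝ}
    (ht₀ : a < t₀) (hcont : ∀ x, ContinuousOn (F · x) (Ici a))
    (hbdd : ∀ T, ∃ L : ℝ≥0, ∀ t ∈ Icc a T, ∀ x, ‖F t x‖ ≤ L)
    (hlip : ∀ T, ∃ K : ℝ≥0, ∀ t ∈ Icc a T, LipschitzWith K (F t)) (x₀ : E) :
    ∃ X : ℝ → E, X t₀ = x₀ ∧ ∀ t, a < t → HasDerivAt X (F t (X t)) t := by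
  have hlocal : ∀ T, ∃ X : ℝ → E, t₀ < T →
      X t₀ = x₀ ∧ ∀ t ∈ Ioo a T, HasDerivAt X (F t (X t)) t := by
    intro T
    by_cases hT : t₀ < T
    · obtain ⟨L, hL⟩ := hbdd T
      obtain ⟨K, hK⟩ := hlip T
      obtain ⟨X, hX⟩ := exists_forall_mem_Ioo_hasDerivAt_of_bounded_of_lipschitzWith
        ⟨ht₀.le, hT.le⟩ (fun x ↦ (hcont x).mono Icc_subset_Ici_self) hL hK x₀
      exact ⟨X, fun _ ↦ hX⟩
    · exact ⟨0, fun h ↦ absurd h hT⟩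
  choose X hX using hlocal
  have hunique : ∀ T T', t₀ < T → T ≤ T' → EqOn (X T) (X T') (Ioo a T) := by
    intro T T' hT hTT'
    obtain ⟨K, hK⟩ := hlip T
    have hT' := hT.trans_le hTT'
    exact eqOn_Ioo_of_hasDerivAt_of_lipschitzWith ⟨ht₀, hT⟩
      (fun t ht ↦ hK t (Ioo_subset_Icc_self ht)) (hX T hT).2
      (fun t ht ↦ (hX T' hT').2 t ⟨ht.1, ht.2.trans_le hTT'⟩) ((hX T hT).1.trans (hX T' hT').1.symm)
  let T : ℝ → ℝ := fun t ↦ max t t₀ + 1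
  have lt_T : ∀ t, t < T t := fun t ↦ by linarith [le_max_left t t₀]
  have ht₀T : ∀ t, t₀ < T t := fun t ↦ by linarith [le_max_right t t₀]
  refine ⟨fun t ↦ X (T t) t, (hX _ (ht₀T t₀)).1, fun t ht ↦ ?_⟩
  refine ((hX _ (ht₀T t)).2 t ⟨ht, lt_T t⟩).congr_of_eventuallyEq ?_
  filter_upwards [Ioo_mem_nhds ht (lt_T t)] with s hs
  rcases le_total (T s) (T t) with hle | hle
  · exact hunique _ _ (ht₀T s) hle ⟨hs.1, lt_T s⟩
  · exact (hunique _ _ (ht₀T t) hle hs).symm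

theorem exists_extension_hasDerivAt_of_bounded_of_lipschitzWith [CompleteSpace E] (hac : a < c)
    (hcont : ∀ x, ContinuousOn (F · x) (Ici a))
    (hbdd : ∀ T, ∃ L : ℝ≥0, ∀ t ∈ Icc a T, ∀ x, ‖F t x‖ ≤ L)
    (hlip : ∀ T, ∃ K : ℝ≥0, ∀ t ∈ Icc a T, LipschitzWith K (F t)) {X : ℝ → E}
    (hX : ∀ t ∈ Ioo a c, HasDerivAt X (F t (X t)) t) :
    ∃ Y : ℝ → E, EqOn Y X (Iio c) ∧ ∀ t, a < t → HasDerivAt Y (F t (Y t)) t := by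
  obtain ⟨t₀, ht₀⟩ := exists_between hac
  obtain ⟨Z, hZ₀, hZ⟩ :=
    exists_forall_gt_hasDerivAt_of_bounded_of_lipschitzWith ht₀.1 hcont hbdd hlip (X t₀)
  obtain ⟨K, hK⟩ := hlip c
  have hZX : EqOn Z X (Ioo a c) :=
    eqOn_Ioo_of_hasDerivAt_of_lipschitzWith ht₀ (fun t ht ↦ hK t (Ioo_subset_Icc_self ht))
      (fun t ht ↦ hZ t ht.1) hX hZ₀
  classical
  let Y := (Iio c).piecewise X Z
  have hYX : EqOn Y X (Iio c) := piecewise_eqOn _ _ _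
  have hYZ : EqOn Y Z (Ioi a) := by
    intro t ht
    by_cases htc : t < c
    · exact (hYX htc).trans (hZX ⟨ht, htc⟩).symm
    · exact piecewise_eq_of_notMem _ _ _ htc
  refine ⟨Y, hYX, fun t ht ↦ ?_⟩
  rw [hYZ ht]
  exact (hZ t ht).congr_of_eventuallyEq (hYZ.eventuallyEq_of_mem (Ioi_mem_nhds ht))

theorem exists_extension_hasDerivAt_of_mem_compact [CompleteSpace E] (hac : a < c) {S : Set E}
    (hS : IsCompact S) (hSconv : Convex ℝ S)
    (hF : ContDiffOn ℝ 1 (Function.uncurry F) (Ici a ×ˢ S))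
    {r : E → E} {C : ℝ≥0} (hr : LipschitzWith C r) (hrS : ∀ x, r x ∈ S) (hrid : ∀ x ∈ S, r x = x)
    {X : ℝ → E} (hXS : ∀ t ∈ Ioo a c, X t ∈ S)
    (hX : ∀ t ∈ Ioo a c, HasDerivAt X (F t (X t)) t) :
    ∃ Y : ℝ → E, EqOn Y X (Iio c) ∧
      ∀ t, a < t → ContinuousAt Y t ∧ (Y t ∈ S → HasDerivAt Y (F t (Y t)) t) := by
  have hcont : ∀ x, ContinuousOn (fun t ↦ F t (r x)) (Ici a) := fun x ↦
    ContinuousOn.comp (g := Function.uncurry F) (f := fun t ↦ (t, r x)) hF.continuousOn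
      (by fun_prop) fun t ht ↦ ⟨ht, hrS x⟩
  have hFT : ∀ T, ContDiffOn ℝ 1 (Function.uncurry F) (Icc a T ×ˢ S) := fun T ↦
    hF.mono (prod_mono_left Icc_subset_Ici_self)
  have hbdd : ∀ T, ∃ L : ℝ≥0, ∀ t ∈ Icc a T, ∀ x, ‖F t (r x)‖ ≤ L := by
    intro T
    obtain ⟨M, hM⟩ :=
      (isCompact_Icc.prod hS).exists_bound_of_continuousOn (hFT T).continuousOn
    exact ⟨M.toNNReal, fun t ht x ↦ (hM (t, r x) ⟨ht, hrS x⟩).trans (Real.le_coe_toNNReal M)⟩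
  have hlip : ∀ T, ∃ K : ℝ≥0, ∀ t ∈ Icc a T, LipschitzWith K (fun x ↦ F t (r x)) := by
    intro T
    obtain ⟨K, hK⟩ := (hFT T).exists_lipschitzOnWith one_ne_zero
      ((convex_Icc a T).prod hSconv) (isCompact_Icc.prod hS)
    refine ⟨K * (1 * C), fun t ht ↦ lipschitzOnWith_univ.1 ?_⟩
    have hslice : LipschitzWith (1 * C) fun x ↦ (t, r x) := (LipschitzWith.prodMk_left t).comp hr
    exact hK.comp hslice.lipschitzOnWith fun x _ ↦ ⟨ht, hrS x⟩
  have hXr : ∀ t ∈ Ioo a c, HasDerivAt X (F t (r (X t))) t := fun t ht ↦ by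
    simpa only [hrid _ (hXS t ht)] using hX t ht
  obtain ⟨Y, hYX, hY⟩ :=
    exists_extension_hasDerivAt_of_bounded_of_lipschitzWith hac hcont hbdd hlip hXr
  exact ⟨Y, hYX, fun t ht ↦ ⟨(hY t ht).continuousAt, fun hYS ↦ by
    simpa only [hrid _ hYS] using hY t ht⟩⟩

end GlobalExtension

lemma exists_lipschitzWith_retraction_Icc_prod_Icc {a b c d : ℝ} (hab : a ≤ b) (hcd : c ≤ d) :
    ∃ r : ℝ × ℝ → ℝ × ℝ, LipschitzWith 1 r ∧ (∀ x, r x ∈ Icc a b ×ˢ Icc c d) ∧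
      ∀ x ∈ Icc a b ×ˢ Icc c d, r x = x := by
  have hlip : ∀ {l u : ℝ} (h : l ≤ u), LipschitzWith 1 fun x ↦ (projIcc l u h x : ℝ) :=
    fun h ↦ LipschitzWith.projIcc h
  refine ⟨fun x ↦ (projIcc a b hab x.1, projIcc c d hcd x.2), ?_,
    fun x ↦ ⟨Subtype.prop _, Subtype.prop _⟩, fun x hx ↦ ?_⟩
  · simpa using ((hlip hab).comp LipschitzWith.prod_fst).prodMk
      ((hlip hcd).comp LipschitzWith.prod_snd)
  · simp only [projIcc_of_mem hab hx.1, projIcc_of_mem hcd hx.2]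

section Prod

variable {E F : Type*} [NormedAddCommGroup E] [NormedSpace ℝ E] [NormedAddCommGroup F]
  [NormedSpace ℝ F] {X : ℝ → E × F} {X' : E × F} {t : ℝ}

lemma hasDerivAt_fst_comp (hX : HasDerivAt X X' t) : HasDerivAt (fun s ↦ (X s).1) X'.1 t := by
  simpa using hX.hasFDerivAt.fst.hasDerivAt

lemma hasDerivAt_snd_comp (hX : HasDerivAt X X' t) : HasDerivAt (fun s ↦ (X s).2) X'.2 t := by
  simpa using hX.hasFDerivAt.snd.hasDerivAt

end Prod

/-! ### First zeros -/

lemma forall_mem_Ico_neg_of_no_first_zero {f : ℝ → ℝ} {s T : ℝ} (hf : ContinuousOn f (Ico s T))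
    (hs : f s < 0) (hzero : ∀ t ∈ Ioo s T, (∀ x ∈ Ico s t, f x < 0) → f t ≠ 0) :
    ∀ t ∈ Ico s T, f t < 0 := by
  intro t₁ ht₁
  by_contra! hft₁
  have hcont : ∀ x ∈ Icc s t₁, ContinuousOn f (Icc s x) := fun x hx ↦
    hf.mono fun _ hy ↦ ⟨hy.1, (hy.2.trans hx.2).trans_lt ht₁.2⟩
  have exists_zero : ∀ x ∈ Icc s t₁, 0 ≤ f x → ∃ z ∈ Icc s x, f z = 0 := fun x hx hfx ↦
    intermediate_value_Icc hx.1 (hcont x hx) ⟨hs.le, hfx⟩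
  have hcompact : IsCompact (Icc s t₁ ∩ f ⁻¹' {0}) :=
    isCompact_Icc.of_isClosed_subset ((hcont t₁ ⟨ht₁.1, le_rfl⟩).preimage_isClosed_of_isClosed
      isClosed_Icc isClosed_singleton) inter_subset_left
  obtain ⟨t, ⟨⟨hst, htt₁⟩, hft⟩, hleast⟩ :=
    hcompact.exists_isLeast (exists_zero t₁ ⟨ht₁.1, le_rfl⟩ hft₁)
  have hst' : s < t := hst.lt_of_ne (by rintro rfl; exact hs.ne hft)
  refine hzero t ⟨hst', htt₁.trans_lt ht₁.2⟩ (fun x hx ↦ ?_) hft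
  by_contra! hfx
  obtain ⟨z, hz, hfz⟩ := exists_zero x ⟨hx.1, hx.2.le.trans htt₁⟩ hfx
  have hzx : z < t := hz.2.trans_lt hx.2
  exact hzx.not_ge (hleast ⟨⟨hz.1, hzx.le.trans htt₁⟩, hfz⟩)

lemma nonneg_of_hasDerivAt_of_forall_mem_Ioo_nonpos {f : ℝ → ℝ} {f' s t : ℝ} (hst : s < t)
    (hf : HasDerivAt f f' t) (hft : f t = 0) (hneg : ∀ x ∈ Ioo s t, f x ≤ 0) : 0 ≤ f' := by
  refine ge_of_tendsto ((hasDerivWithinAt_iff_tendsto_slope' self_notMem_Iio).1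
    (hf.hasDerivWithinAt (s := Iio t))) ?_
  filter_upwards [Ioo_mem_nhdsLT hst] with x hx
  rw [slope_def_field, hft, sub_zero]
  exact div_nonneg_of_nonpos (hneg x hx) (sub_nonpos.2 hx.2.le)

/-! ### The trapping region -/

section Profile

variable {p : ℕ}

lemma alphaP_pos (hp : 2 ≤ p) : 0 < alphaP p := by
  have : (2 : ℝ) ≤ p := by exact_mod_cast hp
  exact div_pos two_pos (by linarith)

lemma alphaP_le_one (hp : 3 ≤ p) : alphaP p ≤ 1 := by
  have : (3 : ℝ) ≤ p := by exact_mod_cast hp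
  exact (div_le_one (by linarith)).2 (by linarith)

lemma bZero_nonneg : 0 ≤ bZero p := by
  unfold bZero
  positivity

lemma bZero_pow_pred (hp : 2 ≤ p) : bZero p ^ (p - 1) = alphaP p * (alphaP p + 1) := by
  have hp' : (2 : ℝ) ≤ p := by exact_mod_cast hp
  have hne : (p : ℝ) - 1 ≠ 0 := by linarith
  rw [bZero, alphaP, ← Real.rpow_natCast, ← Real.rpow_mul (by positivity),
    Nat.cast_sub (by omega), Nat.cast_one, one_div_mul_cancel hne, Real.rpow_one]
  field_simp
  ring

lemma pow_lt_alphaP_mul_of_lt_bZero (hp : 2 ≤ p) {x : ℝ} (hx : 0 < x) (hxb : x < bZero p) :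
    x ^ p < alphaP p * (alphaP p + 1) * x := by
  calc x ^ p = x ^ (p - 1) * x := (pow_sub_one_mul (by omega) x).symm
    _ < bZero p ^ (p - 1) * x := by gcongr; omega
    _ = alphaP p * (alphaP p + 1) * x := by rw [bZero_pow_pred hp]

lemma alphaP_mul_one_sub_add_pow_pos (hp : 3 ≤ p) {x : ℝ} (hx : 0 < x) :
    0 < alphaP p * (1 - alphaP p) * x + x ^ p := by
  have hα := alphaP_pos (show 2 ≤ p by omega)
  have hα₁ : 0 ≤ 1 - alphaP p := sub_nonneg.2 (alphaP_le_one hp)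
  positivity

/-- The vector field of the profile equation written as a first-order system for `(u, u')`, solved
for `u''`. At `ρ = 1` it takes the junk value of a division by zero. -/
noncomputable def profileField (p : ℕ) (ρ : ℝ) (x : ℝ × ℝ) : ℝ × ℝ :=
  (x.2, ((2 / ρ - (2 + 2 * alphaP p) * ρ) * x.2 - alphaP p * (alphaP p + 1) * x.1 + x.1 ^ p)
    / (ρ ^ 2 - 1))

/-- The forward-invariant region of the profile system at time `ρ`: the pairs `(u, u')` with
`0 < u < b₀`, `u' < 0` and `(ρ u)' = u + ρ u' > 0`. -/
def trappingRegion (p : ℕ) (ρ : ℝ) : Set (ℝ × ℝ) :=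
  {x | 0 < x.1 ∧ x.1 < bZero p ∧ x.2 < 0 ∧ 0 < x.1 + ρ * x.2}

/-- A compact box containing `trappingRegion p ρ` for every `ρ ≥ 1`. -/
def trappingBox (p : ℕ) : Set (ℝ × ℝ) := Icc 0 (bZero p) ×ˢ Icc (-bZero p) 0

lemma mem_trappingBox_of_nonneg {ρ : ℝ} (hρ : 1 ≤ ρ) {x : ℝ × ℝ} (hx₀ : 0 ≤ x.1)
    (hxb : x.1 ≤ bZero p) (hx' : x.2 ≤ 0) (hw : 0 ≤ x.1 + ρ * x.2) : x ∈ trappingBox p :=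
  ⟨⟨hx₀, hxb⟩, by nlinarith, hx'⟩

lemma trappingRegion_subset_trappingBox {ρ : ℝ} (hρ : 1 ≤ ρ) :
    trappingRegion p ρ ⊆ trappingBox p := fun _ ⟨h₀, hb, hx', hw⟩ ↦
  mem_trappingBox_of_nonneg hρ h₀.le hb.le hx'.le hw.le

lemma sq_sub_one_pos {ρ : ℝ} (hρ : 1 < ρ) : 0 < ρ ^ 2 - 1 :=
  sub_pos.2 (one_lt_pow₀ hρ two_ne_zero)

lemma contDiffOn_uncurry_profileField {n : WithTop ℕ∞} :
    ContDiffOn ℝ n (Function.uncurry (profileField p)) (Ioi 1 ×ˢ univ) := by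
  have hρ : ∀ z ∈ Ioi (1 : ℝ) ×ˢ (univ : Set (ℝ × ℝ)), z.1 ≠ 0 := fun z hz ↦
    (zero_lt_one.trans hz.1).ne'
  have hden : ∀ z ∈ Ioi (1 : ℝ) ×ˢ (univ : Set (ℝ × ℝ)), z.1 ^ 2 - 1 ≠ 0 := fun z hz ↦
    (sq_sub_one_pos hz.1).ne'
  unfold Function.uncurry profileField
  fun_prop (disch := assumption)

lemma profileField_snd_neg_of_snd_eq_zero (hp : 2 ≤ p) {ρ : ℝ} (hρ : 1 < ρ) {x : ℝ × ℝ}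
    (hx₀ : 0 < x.1) (hxb : x.1 < bZero p) (hx' : x.2 = 0) : (profileField p ρ x).2 < 0 := by
  have hpow := pow_lt_alphaP_mul_of_lt_bZero hp hx₀ hxb
  refine div_neg_of_neg_of_pos ?_ (sq_sub_one_pos hρ)
  rw [hx', mul_zero]
  linarith

lemma deriv_fst_add_mul_snd_pos_of_eq_zero (hp : 3 ≤ p) {ρ : ℝ} (hρ : 1 < ρ) {x : ℝ × ℝ}
    (hx₀ : 0 < x.1) (hw : x.1 + ρ * x.2 = 0) :
    0 < x.2 + (x.2 + ρ * (profileField p ρ x).2) := by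
  have hq := sq_sub_one_pos hρ
  have hρ₀ : 0 < ρ := by linarith
  have hx' : x.2 = -x.1 / ρ := by rw [eq_div_iff hρ₀.ne']; linarith
  have heq : x.2 + (x.2 + ρ * (profileField p ρ x).2) =
      ρ * (alphaP p * (1 - alphaP p) * x.1 + x.1 ^ p) / (ρ ^ 2 - 1) := by
    rw [profileField, hx']
    have := hq.ne'
    field_simp
    ring
  have hpos := alphaP_mul_one_sub_add_pow_pos hp hx₀
  rw [heq]
  positivity

section Trapping

variable {X : ℝ → ℝ × ℝ} {s t : ℝ}

lemma fst_le_and_mul_fst_le_of_forall_mem_trappingRegion (hst : s < t)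
    (hcont : ContinuousOn X (Icc s t)) (hX : ∀ x ∈ Ioo s t, HasDerivAt X (profileField p x (X x)) x)
    (htrap : ∀ x ∈ Ioo s t, X x ∈ trappingRegion p x) :
    (X t).1 ≤ (X s).1 ∧ s * (X s).1 ≤ t * (X t).1 := by
  have hderiv : ∀ x ∈ interior (Icc s t), HasDerivAt (fun x ↦ (X x).1) (X x).2 x := by
    rw [interior_Icc]
    exact fun x hx ↦ hasDerivAt_fst_comp (hX x hx)
  have htrap' : ∀ x ∈ interior (Icc s t), X x ∈ trappingRegion p x := by
    rwa [interior_Icc]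
  have hanti : AntitoneOn (fun x ↦ (X x).1) (Icc s t) :=
    antitoneOn_of_hasDerivWithinAt_nonpos (convex_Icc s t) (by fun_prop)
      (fun x hx ↦ (hderiv x hx).hasDerivWithinAt) fun x hx ↦ (htrap' x hx).2.2.1.le
  have hmono : MonotoneOn (fun x ↦ x * (X x).1) (Icc s t) :=
    monotoneOn_of_hasDerivWithinAt_nonneg (convex_Icc s t) (by fun_prop)
      (fun x hx ↦ ((hasDerivAt_id' x).mul (hderiv x hx)).hasDerivWithinAt) fun x hx ↦ by
        linarith [(htrap' x hx).2.2.2]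
  have hs := left_mem_Icc.2 hst.le
  have ht := right_mem_Icc.2 hst.le
  exact ⟨hanti hs ht hst.le, hmono hs ht hst.le⟩

lemma snd_neg_of_forall_mem_trappingRegion (hp : 2 ≤ p) (ht : 1 < t) (hst : s < t)
    (hX : HasDerivAt X (profileField p t (X t)) t)
    (htrap : ∀ x ∈ Ioo s t, X x ∈ trappingRegion p x) (h₀ : 0 < (X t).1) (hb : (X t).1 < bZero p)
    (h' : (X t).2 ≤ 0) : (X t).2 < 0 := by
  refine h'.lt_of_ne fun hzero ↦ ?_
  exact (profileField_snd_neg_of_snd_eq_zero hp ht h₀ hb hzero).not_ge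
    (nonneg_of_hasDerivAt_of_forall_mem_Ioo_nonpos hst (hasDerivAt_snd_comp hX) hzero
      fun x hx ↦ (htrap x hx).2.2.1.le)

lemma fst_add_mul_snd_pos_of_forall_mem_trappingRegion (hp : 3 ≤ p) (ht : 1 < t) (hst : s < t)
    (hX : HasDerivAt X (profileField p t (X t)) t)
    (htrap : ∀ x ∈ Ioo s t, X x ∈ trappingRegion p x) (h₀ : 0 < (X t).1)
    (hw : 0 ≤ (X t).1 + t * (X t).2) : 0 < (X t).1 + t * (X t).2 := by
  refine hw.lt_of_ne' fun hzero ↦ ?_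
  have hderiv : HasDerivAt (fun x ↦ -((X x).1 + x * (X x).2))
      (-((X t).2 + (1 * (X t).2 + t * (profileField p t (X t)).2))) t :=
    ((hasDerivAt_fst_comp hX).add ((hasDerivAt_id' t).mul (hasDerivAt_snd_comp hX))).neg
  have hnonneg := nonneg_of_hasDerivAt_of_forall_mem_Ioo_nonpos hst hderiv (neg_eq_zero.2 hzero)
    fun x hx ↦ neg_nonpos.2 (htrap x hx).2.2.2.le
  have hpos := deriv_fst_add_mul_snd_pos_of_eq_zero hp ht h₀ hzero
  linarith

/-- The largest of the four quantities that are negative on `trappingRegion p ρ`. -/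
noncomputable def trappingGauge (p : ℕ) (ρ : ℝ) (x : ℝ × ℝ) : ℝ :=
  max (max (-x.1) (x.1 - bZero p)) (max x.2 (-(x.1 + ρ * x.2)))

lemma trappingGauge_neg_iff {ρ : ℝ} {x : ℝ × ℝ} :
    trappingGauge p ρ x < 0 ↔ x ∈ trappingRegion p ρ := by
  simp only [trappingGauge, trappingRegion, max_lt_iff, neg_lt_zero, sub_neg, and_assoc,
    mem_ofPred_eq]

lemma trappingGauge_nonpos_iff {ρ : ℝ} {x : ℝ × ℝ} :
    trappingGauge p ρ x ≤ 0 ↔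
      0 ≤ x.1 ∧ x.1 ≤ bZero p ∧ x.2 ≤ 0 ∧ 0 ≤ x.1 + ρ * x.2 := by
  simp only [trappingGauge, max_le_iff, neg_nonpos, sub_nonpos, and_assoc]

theorem forall_mem_Ico_mem_trappingRegion (hp : 3 ≤ p) {T : ℝ} (hs : 1 ≤ s)
    (hcont : ContinuousOn X (Ico s T))
    (hX : ∀ t ∈ Ioo s T, X t ∈ trappingBox p → HasDerivAt X (profileField p t (X t)) t)
    (hXs : X s ∈ trappingRegion p s) : ∀ t ∈ Ico s T, X t ∈ trappingRegion p t := by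
  suffices ∀ t ∈ Ico s T, trappingGauge p t (X t) < 0 from fun t ht ↦
    trappingGauge_neg_iff.1 (this t ht)
  refine forall_mem_Ico_neg_of_no_first_zero (by unfold trappingGauge; fun_prop)
    (trappingGauge_neg_iff.2 hXs) fun t ht hbefore hzero ↦ ?_
  have htrap : ∀ x ∈ Ico s t, X x ∈ trappingRegion p x := fun x hx ↦
    trappingGauge_neg_iff.1 (hbefore x hx)
  have htrap' : ∀ x ∈ Ioo s t, X x ∈ trappingRegion p x := fun x hx ↦
    htrap x (Ioo_subset_Ico_self hx)
  have ht₁ : 1 < t := hs.trans_lt ht.1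
  obtain ⟨hle, hmul⟩ := fst_le_and_mul_fst_le_of_forall_mem_trappingRegion ht.1
    (hcont.mono (Icc_subset_Ico_right ht.2))
    (fun x hx ↦ hX x ⟨hx.1, hx.2.trans ht.2⟩
      (trappingRegion_subset_trappingBox (hs.trans hx.1.le) (htrap' x hx))) htrap'
  obtain ⟨hfst, hfstb, hsnd, hw⟩ := trappingGauge_nonpos_iff.1 hzero.le
  have hXt := hX t ht (mem_trappingBox_of_nonneg ht₁.le hfst hfstb hsnd hw)
  have hpos : 0 < (X t).1 := by
    have : 0 < s * (X s).1 := mul_pos (by linarith) hXs.1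
    exact pos_of_mul_pos_right (this.trans_le hmul) (by linarith)
  have hlt : (X t).1 < bZero p := hle.trans_lt hXs.2.1
  exact hzero.not_lt (trappingGauge_neg_iff.2 ⟨hpos, hlt,
    snd_neg_of_forall_mem_trappingRegion (by omega) ht₁ ht.1 hXt htrap' hpos hlt hsnd,
    fst_add_mul_snd_pos_of_forall_mem_trappingRegion hp ht₁ ht.1 hXt htrap' hpos hw⟩)

lemma exists_extension_hasDerivAt_of_mem_trappingBox {c : ℝ} (hc : 1 < c)
    (hcont : ContinuousOn X (Ico 1 c)) (hbox : ∀ t ∈ Ioo 1 c, X t ∈ trappingBox p)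
    (hX : ∀ t ∈ Ioo 1 c, HasDerivAt X (profileField p t (X t)) t) :
    ∃ Y : ℝ → ℝ × ℝ, EqOn Y X (Iio c) ∧ ContinuousOn Y (Ici 1) ∧
      ∀ t, 1 < t → Y t ∈ trappingBox p → HasDerivAt Y (profileField p t (Y t)) t := by
  have hb : 0 ≤ bZero p := bZero_nonneg
  obtain ⟨r, hr, hrbox, hrid⟩ :=
    exists_lipschitzWith_retraction_Icc_prod_Icc hb (neg_nonpos.2 hb)
  obtain ⟨a, ha, hac⟩ := exists_between hc
  obtain ⟨Y, hYX, hY⟩ := exists_extension_hasDerivAt_of_mem_compact (S := trappingBox p) hac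
    (isCompact_Icc.prod isCompact_Icc) ((convex_Icc _ _).prod (convex_Icc _ _))
    (contDiffOn_uncurry_profileField.mono (prod_mono (Ici_subset_Ioi.2 ha) (subset_univ _)))
    hr hrbox hrid (fun t ht ↦ hbox t ⟨ha.trans ht.1, ht.2⟩)
    fun t ht ↦ hX t ⟨ha.trans ht.1, ht.2⟩
  have hYX_near : ∀ t < c, Y =ᶠ[𝓝 t] X := fun t ht ↦
    hYX.eventuallyEq_of_mem (Iio_mem_nhds ht)
  refine ⟨Y, hYX, fun t ht ↦ ?_, fun t ht hYt ↦ ?_⟩ <;> rcases lt_or_ge t c with htc | htc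
  · have hXt : ContinuousWithinAt X (Ici 1) t := by
      rw [← continuousWithinAt_inter (Iio_mem_nhds htc), Ici_inter_Iio]
      exact hcont t ⟨ht, htc⟩
    exact hXt.congr_of_eventuallyEq ((hYX_near t htc).filter_mono nhdsWithin_le_nhds) (hYX htc)
  · exact (hY t (hac.trans_le htc)).1.continuousWithinAt
  · rw [hYX htc]
    exact (hX t ⟨ht, htc⟩).congr_of_eventuallyEq (hYX_near t htc)
  · exact (hY t (hac.trans_le htc)).2 hYt

theorem exists_extension_mem_trappingRegion (hp : 3 ≤ p) {c : ℝ} (hc : 1 < c)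
    (hcont : ContinuousOn X (Ico 1 c))
    (hX : ∀ t ∈ Ioo 1 c, HasDerivAt X (profileField p t (X t)) t)
    (hX₁ : X 1 ∈ trappingRegion p 1) :
    ∃ Y : ℝ → ℝ × ℝ, EqOn Y X (Iio c) ∧ ∀ t, 1 < t →
      Y t ∈ trappingRegion p t ∧ HasDerivAt Y (profileField p t (Y t)) t := by
  have htrap := forall_mem_Ico_mem_trappingRegion hp le_rfl hcont (fun t ht _ ↦ hX t ht) hX₁
  obtain ⟨Y, hYX, hYcont, hY⟩ := exists_extension_hasDerivAt_of_mem_trappingBox hc hcont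
    (fun t ht ↦ trappingRegion_subset_trappingBox ht.1.le (htrap t (Ioo_subset_Ico_self ht))) hX
  have hYtrap : ∀ t, 1 < t → Y t ∈ trappingRegion p t := fun t ht ↦
    forall_mem_Ico_mem_trappingRegion (T := t + 1) hp le_rfl (hYcont.mono Ico_subset_Ici_self)
      (fun x hx ↦ hY x hx.1) (by rwa [hYX hc]) t ⟨ht.le, lt_add_one t⟩
  exact ⟨Y, hYX, fun t ht ↦ ⟨hYtrap t ht,
    hY t ht (trappingRegion_subset_trappingBox ht.le (hYtrap t ht))⟩⟩

end Trapping

/-! ### The profile equation as a first-order system -/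

variable {u : ℝ → ℝ} {ρ : ℝ}

lemma profileEq_iff_deriv_deriv_eq (hρ : 1 < ρ) :
    ProfileEq p u ρ ↔ deriv (deriv u) ρ = (profileField p ρ (u ρ, deriv u ρ)).2 := by
  rw [ProfileEq, profileField, eq_div_iff (sq_sub_one_pos hρ).ne']
  constructor <;> intro h <;> linarith

lemma hasDerivAt_prodMk_deriv_of_profileEq (hρ : 1 < ρ) (hu : ContDiffAt ℝ 2 u ρ)
    (heq : ProfileEq p u ρ) :
    HasDerivAt (fun t ↦ (u t, deriv u t)) (profileField p ρ (u ρ, deriv u ρ)) ρ := by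
  have hu' : HasDerivAt (deriv u) (profileField p ρ (u ρ, deriv u ρ)).2 ρ := by
    rw [← (profileEq_iff_deriv_deriv_eq hρ).1 heq]
    exact ((hu.derivWithin (m := 1) (by norm_num)).differentiableAt one_ne_zero).hasDerivAt
  exact (hu.differentiableAt two_ne_zero).hasDerivAt.prodMk hu'

lemma profileEq_fst_of_eventually_hasDerivAt {X : ℝ → ℝ × ℝ} (hρ : 1 < ρ)
    (hX : ∀ᶠ t in 𝓝 ρ, HasDerivAt X (profileField p t (X t)) t) :
    DifferentiableAt ℝ (fun t ↦ (X t).1) ρ ∧ DifferentiableAt ℝ (deriv fun t ↦ (X t).1) ρ ∧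
      ProfileEq p (fun t ↦ (X t).1) ρ := by
  have hderiv : deriv (fun t ↦ (X t).1) =ᶠ[𝓝 ρ] fun t ↦ (X t).2 :=
    hX.mono fun t ht ↦ (hasDerivAt_fst_comp ht).deriv
  have hderiv₂ := (hasDerivAt_snd_comp hX.self_of_nhds).congr_of_eventuallyEq hderiv
  refine ⟨(hasDerivAt_fst_comp hX.self_of_nhds).differentiableAt, hderiv₂.differentiableAt, ?_⟩
  rw [profileEq_iff_deriv_deriv_eq hρ, hderiv₂.deriv, hderiv.self_of_nhds]

lemma profileEq_one_of_eventually (hu : ContDiffAt ℝ 2 u 1)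
    (heq : ∀ᶠ ρ in 𝓝[>] 1, ProfileEq p u ρ) : ProfileEq p u 1 := by
  have hu' : ContDiffAt ℝ 1 (deriv u) 1 := hu.derivWithin (by norm_num)
  have hu'' : ContDiffAt ℝ 0 (deriv (deriv u)) 1 := hu'.derivWithin (by norm_num)
  have hcont : ContinuousAt (fun ρ ↦ (1 - ρ ^ 2) * deriv (deriv u) ρ
      + (2 / ρ - (2 + 2 * alphaP p) * ρ) * deriv u ρ
      - alphaP p * (alphaP p + 1) * u ρ + u ρ ^ p) 1 := by
    have := hu.continuousAt
    have := hu'.continuousAt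
    have := hu''.continuousAt
    fun_prop (disch := norm_num)
  exact tendsto_nhds_unique (hcont.tendsto.mono_left nhdsWithin_le_nhds)
    (tendsto_const_nhds.congr' (heq.mono fun ρ h ↦ h.symm))

lemma mem_trappingRegion_one_of_profileEq (hp : 3 ≤ p) (heq : ProfileEq p u 1) (h₀ : 0 < u 1)
    (hb : u 1 < bZero p) : (u 1, deriv u 1) ∈ trappingRegion p 1 := by
  have hα := alphaP_pos (show 2 ≤ p by omega)
  have hcone : 2 * alphaP p * deriv u 1 = u 1 ^ p - alphaP p * (alphaP p + 1) * u 1 := by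
    rw [ProfileEq] at heq
    linarith
  have hpow := pow_lt_alphaP_mul_of_lt_bZero (show 2 ≤ p by omega) h₀ hb
  have hpos := alphaP_mul_one_sub_add_pow_pos hp h₀
  refine ⟨h₀, hb, ?_, ?_⟩
  · refine neg_of_mul_neg_right (a := 2 * alphaP p) ?_ (by positivity)
    linarith
  · refine pos_of_mul_pos_right (a := 2 * alphaP p) ?_ (by positivity)
    linarith

end Profile

theorem extension_beyond_light_cone_general (p : ℕ) (hp : 3 ≤ p) (u : ℝ → ℝ) (ε : ℝ) (hε : 0 < ε)
    (hu : ContDiffOn ℝ 2 u (Ioo (1 - ε) (1 + ε)))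
    (heq : ∀ ρ ∈ Ioo 1 (1 + ε), ProfileEq p u ρ) (h₀ : 0 < u 1) (hb : u 1 < bZero p) :
    ∃ v : ℝ → ℝ, (∀ ρ ∈ Ioo (1 - ε) (1 + ε), v ρ = u ρ) ∧
      (∀ ρ : ℝ, 1 < ρ → DifferentiableAt ℝ v ρ ∧ DifferentiableAt ℝ (deriv v) ρ ∧
        ProfileEq p v ρ) ∧
      (∀ ρ : ℝ, 1 < ρ → 0 < v ρ ∧ v ρ < bZero p) := by
  have hc : 1 < 1 + ε := by linarith
  have hu_at : ∀ ρ ∈ Ico 1 (1 + ε), ContDiffAt ℝ 2 u ρ := fun ρ hρ ↦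
    hu.contDiffAt (Ioo_mem_nhds (by linarith [hρ.1]) hρ.2)
  have heq₁ : ProfileEq p u 1 := profileEq_one_of_eventually (hu_at 1 ⟨le_rfl, hc⟩)
    (by filter_upwards [Ioo_mem_nhdsGT hc] with ρ hρ using heq ρ hρ)
  have hcont : ContinuousOn (fun ρ ↦ (u ρ, deriv u ρ)) (Ico 1 (1 + ε)) := fun ρ hρ ↦
    ((hu_at ρ hρ).continuousAt.prodMk
      ((hu_at ρ hρ).derivWithin (m := 1) (by norm_num)).continuousAt).continuousWithinAt
  obtain ⟨Y, hYu, hY⟩ := exists_extension_mem_trappingRegion hp hc hcont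
    (fun ρ hρ ↦ hasDerivAt_prodMk_deriv_of_profileEq hρ.1 (hu_at ρ (Ioo_subset_Ico_self hρ))
      (heq ρ hρ)) (mem_trappingRegion_one_of_profileEq hp heq₁ h₀ hb)
  refine ⟨fun ρ ↦ (Y ρ).1, fun ρ hρ ↦ congrArg Prod.fst (hYu hρ.2), fun ρ hρ ↦ ?_,
    fun ρ hρ ↦ ⟨(hY ρ hρ).1.1, (hY ρ hρ).1.2.1⟩⟩
  exact profileEq_fst_of_eventually_hasDerivAt hρ
    (by filter_upwards [Ioi_mem_nhds hρ] with t ht using (hY t ht).2)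

/-- **Proposition 2.** A solution analytic near `ρ = 1` with
`u(1) = b ∈ (0, b₀)` extends to a solution for all `ρ ≥ 1` satisfying `0 < u < b₀`
for `ρ > 1`. -/
theorem extension_beyond_light_cone (p : ℕ) (hp_odd : Odd p) (hp : 7 ≤ p)
    (b : ℝ) (hb0 : 0 < b) (hb : b < bZero p)
    (u : ℝ → ℝ) (ε : ℝ) (hε : 0 < ε)
    (hu : AnalyticOnNhd ℝ u (Ioo (1 - ε) (1 + ε)))
    (heq : ∀ ρ ∈ Ioo (1 - ε) (1 + ε), ρ ≠ 1 → ProfileEq p u ρ)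
    (hub : u 1 = b) :
    ∃ v : ℝ → ℝ, (∀ ρ ∈ Ioo (1 - ε) (1 + ε), v ρ = u ρ) ∧
      (∀ ρ : ℝ, 1 < ρ → DifferentiableAt ℝ v ρ ∧ DifferentiableAt ℝ (deriv v) ρ ∧
        ProfileEq p v ρ) ∧
      (∀ ρ : ℝ, 1 < ρ → 0 < v ρ ∧ v ρ < bZero p) :=
  extension_beyond_light_cone_general p (by omega) u ε hε (hu.contDiffOn (uniqueDiffOn_Ioo _ _))
    (fun ρ hρ ↦ heq ρ ⟨by linarith [hρ.1], hρ.2⟩ hρ.1.ne') (hub ▸ hb0) (hub ▸ hb)
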